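/- A_3(16,11) ≤ 29: every code C ⊆ (Fin 3)^{16} with minimum Hamming distance at least 11 has at most 29 elements. -/

import Mathlib

/-!
Distinct codewords agree in at most `16 - 11 = 5` coordinates. Take `m` codewords sharing a letter
at one coordinate. At each of the other `15` coordinates, `(c - 3) * (c - 4) ≥ 0` for the
multiplicity `c` of each of the `3` letters gives at least `6 * m - 36` ordered pairs that agree
there, while an ordered pair has at most `4` of these further agreements. Hence
`15 * (6 * m - 36) ≤ 4 * m * (m - 1)`, which fails for `m = 11` and is an equality for `m = 10`.
So in a code of `30` words every letter occurs exactly `10` times at every coordinate, and two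
distinct words that agree somewhere agree in exactly `5` coordinates. But a fixed word agrees with
`9` others at each of the `16` coordinates, and `5` does not divide `16 * 9`.
-/

open Finset

section Fibers

variable {α β : Type*}

lemma two_mul_mul_card_le_card_offDiag_add (D : Finset β) (k : ℕ) :
    2 * k * #D ≤ #D.offDiag + k * (k + 1) := by
  have consecutive_mul_nonneg : 0 ≤ ((#D : ℤ) - k) * (#D - k - 1) := by
    rcases le_or_gt #D k with h | h
    · exact mul_nonneg_of_nonpos_of_nonpos (by omega) (by omega)
    · exact mul_nonneg (by omega) (by omega)
  rw [offDiag_card]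
  zify [Nat.le_mul_self #D]
  linarith

variable [Fintype α] [DecidableEq α]

lemma card_filter_offDiag_eq_sum_card_offDiag (f : β → α) (D : Finset β) :
    #{p ∈ D.offDiag | f p.1 = f p.2} = ∑ a, #({x ∈ D | f x = a} : Finset β).offDiag := by
  rw [card_eq_sum_card_fiberwise (f := fun p ↦ f p.1) (t := univ) fun _ _ ↦ mem_univ _]
  refine sum_congr rfl fun a _ ↦ congrArg card ?_
  ext p
  simp only [mem_filter, mem_offDiag]
  grind

lemma two_mul_mul_card_le_card_filter_offDiag_add (f : β → α) (D : Finset β) (k : ℕ) :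
    2 * k * #D ≤ #{p ∈ D.offDiag | f p.1 = f p.2} + Fintype.card α * (k * (k + 1)) := by
  calc 2 * k * #D = ∑ a, 2 * k * #{x ∈ D | f x = a} := by
        rw [← mul_sum, ← card_eq_sum_card_fiberwise fun _ _ ↦ mem_univ _]
    _ ≤ ∑ a, (#({x ∈ D | f x = a} : Finset β).offDiag + k * (k + 1)) :=
        sum_le_sum fun _ _ ↦ two_mul_mul_card_le_card_offDiag_add _ k
    _ = #{p ∈ D.offDiag | f p.1 = f p.2} + Fintype.card α * (k * (k + 1)) := by
        rw [sum_add_distrib, card_filter_offDiag_eq_sum_card_offDiag, sum_const, card_univ,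
          smul_eq_mul]

lemma card_filter_eq_of_card_filter_le {f : β → α} {D : Finset β} {M : ℕ}
    (hle : ∀ a, #{x ∈ D | f x = a} ≤ M) (hcard : #D = Fintype.card α * M) (a : α) :
    #{x ∈ D | f x = a} = M := by
  refine (sum_eq_sum_iff_of_le fun b _ ↦ hle b).1 ?_ a (mem_univ a)
  rw [← card_eq_sum_card_fiberwise fun _ _ ↦ mem_univ _, hcard, sum_const, card_univ, smul_eq_mul]

end Fibers

section Agreement

variable {ι α : Type*} [Fintype ι] [DecidableEq α]

/-- The number of coordinates at which two words coincide, complementary to the Hamming distance: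
counting agreements instead of differences turns column counts into collision counts. -/
def agreement (u v : ι → α) : ℕ := #{j | u j = v j}

lemma agreement_add_hammingDist (u v : ι → α) :
    agreement u v + hammingDist u v = Fintype.card ι :=
  card_filter_add_card_filter_not _

lemma sum_agreement {β : Type*} (P : Finset β) (f g : β → ι → α) :
    ∑ p ∈ P, agreement (f p) (g p) = ∑ j, #{p ∈ P | f p j = g p j} :=
  sum_card_bipartiteAbove_eq_sum_card_bipartiteBelow fun p j ↦ f p j = g p j

variable {D : Finset (ι → α)} {i : ι} {a : α} {n s k M : ℕ}

lemma sum_agreement_erase [DecidableEq (ι → α)] {w : ι → α} (hw : w ∈ D)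
    (hfiber : ∀ i a, #{v ∈ D | v i = a} = M) :
    ∑ v ∈ D.erase w, agreement v w = Fintype.card ι * (M - 1) := by
  have column (j : ι) : #{v ∈ D.erase w | v j = w j} = M - 1 := by
    have hw_fiber : w ∈ ({v ∈ D | v j = w j} : Finset (ι → α)) := mem_filter.2 ⟨hw, rfl⟩
    rw [filter_erase, card_erase_of_mem hw_fiber, hfiber]
  simp only [sum_agreement _ (fun v ↦ v) fun _ ↦ w, column, sum_const, card_univ, smul_eq_mul]

lemma sum_agreement_offDiag_le
    (hs : (D : Set (ι → α)).Pairwise fun u v ↦ agreement u v ≤ s) :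
    ∑ p ∈ D.offDiag, agreement p.1 p.2 ≤ #D.offDiag * s :=
  sum_le_card_nsmul _ _ _ fun p hp ↦ by
    rw [mem_offDiag] at hp
    exact hs hp.1 hp.2.1 hp.2.2

lemma agreement_eq_of_le_sum_agreement_offDiag
    (hs : (D : Set (ι → α)).Pairwise fun u v ↦ agreement u v ≤ s)
    (hsum : #D.offDiag * s ≤ ∑ p ∈ D.offDiag, agreement p.1 p.2) :
    (D : Set (ι → α)).Pairwise fun u v ↦ agreement u v = s := by
  have sum_eq : ∑ p ∈ D.offDiag, agreement p.1 p.2 = ∑ _p ∈ D.offDiag, s := by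
    rw [sum_const, smul_eq_mul]
    exact (sum_agreement_offDiag_le hs).antisymm hsum
  have termwise := (sum_eq_sum_iff_of_le fun p hp ↦ by
    rw [mem_offDiag] at hp
    exact hs hp.1 hp.2.1 hp.2.2).1 sum_eq
  exact fun u hu v hv huv ↦ termwise (u, v) (mem_offDiag.2 ⟨hu, hv, huv⟩)

variable [Fintype α]

lemma card_offDiag_add_le_sum_agreement_add (hι : Fintype.card ι = n + 1)
    (hD : ∀ v ∈ D, v i = a) (k : ℕ) :
    #D.offDiag + n * (2 * k * #D) ≤
      ∑ p ∈ D.offDiag, agreement p.1 p.2 + n * (Fintype.card α * (k * (k + 1))) := by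
  classical
  have at_i : #{p ∈ D.offDiag | p.1 i = p.2 i} = #D.offDiag := by
    rw [filter_true_of_mem]
    intro p hp
    rw [mem_offDiag] at hp
    rw [hD _ hp.1, hD _ hp.2.1]
  have away_from_i := card_nsmul_le_sum (univ.erase i) _ _ fun j _ ↦
    two_mul_mul_card_le_card_filter_offDiag_add (fun v : ι → α ↦ v j) D k
  rw [sum_add_distrib, sum_const, card_erase_of_mem (mem_univ i), card_univ, hι,
    Nat.add_sub_cancel, smul_eq_mul, smul_eq_mul] at away_from_i
  rw [sum_agreement, ← add_sum_erase _ _ (mem_univ i), at_i]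
  omega

lemma card_le_of_forall_apply_eq (hι : Fintype.card ι = n + 1)
    (hs : (D : Set (ι → α)).Pairwise fun u v ↦ agreement u v ≤ s + 1)
    (htight : s * (M * (M - 1)) + n * (Fintype.card α * (k * (k + 1))) ≤ n * (2 * k * M))
    (hstep : s * M < n * k) (hD : ∀ v ∈ D, v i = a) : #D ≤ M := by
  by_contra! hM
  obtain ⟨E, hE, hcard⟩ := exists_subset_card_eq (Nat.succ_le_of_lt hM)
  have lower := card_offDiag_add_le_sum_agreement_add hι (fun v hv ↦ hD v (hE hv)) k
  have upper := sum_agreement_offDiag_le (hs.mono (coe_subset.2 hE))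
  have pairs : #E.offDiag = M * (M - 1) + 2 * M := by
    rw [offDiag_card, hcard]
    cases M <;> grind
  rw [pairs] at lower upper
  rw [hcard] at lower
  linarith

lemma agreement_eq_of_forall_apply_eq (hι : Fintype.card ι = n + 1)
    (hs : (D : Set (ι → α)).Pairwise fun u v ↦ agreement u v ≤ s + 1)
    (htight : s * (#D * (#D - 1)) + n * (Fintype.card α * (k * (k + 1))) ≤ n * (2 * k * #D))
    (hD : ∀ v ∈ D, v i = a) :
    (D : Set (ι → α)).Pairwise fun u v ↦ agreement u v = s + 1 := by
  have lower := card_offDiag_add_le_sum_agreement_add hι hD k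
  rw [Nat.mul_sub_one, ← offDiag_card] at htight
  exact agreement_eq_of_le_sum_agreement_offDiag hs (by linarith)

lemma dvd_agreement_of_card_filter_eq (hι : Fintype.card ι = n + 1)
    (hs : (D : Set (ι → α)).Pairwise fun u v ↦ agreement u v ≤ s + 1)
    (htight : s * (M * (M - 1)) + n * (Fintype.card α * (k * (k + 1))) ≤ n * (2 * k * M))
    (hfiber : ∀ i a, #{v ∈ D | v i = a} = M) :
    (D : Set (ι → α)).Pairwise fun u v ↦ s + 1 ∣ agreement u v := by
  intro u hu v hv huv
  rcases Nat.eq_zero_or_pos (agreement u v) with h | h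
  · exact h ▸ dvd_zero _
  · obtain ⟨i, hi⟩ := card_pos.1 h
    have fiber_eq := agreement_eq_of_forall_apply_eq (k := k) hι
      (hs.mono (coe_subset.2 (filter_subset (fun x ↦ x i = v i) D)))
      (by rwa [hfiber]) fun x hx ↦ (mem_filter.1 hx).2
    have hi : u i = v i := (mem_filter.1 hi).2
    exact (fiber_eq (mem_filter.2 ⟨hu, hi⟩) (mem_filter.2 ⟨hv, rfl⟩) huv).symm.dvd

end Agreement

/-- Distinct codewords agree in at most `s + 1` coordinates. With collisions in each column bounded
below through `(c - k) * (c - k - 1) ≥ 0` for the letter multiplicities `c`, `htight` says that `M`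
codewords sharing a letter leave no slack, and then `hstep` that `M + 1` of them are too many. -/
theorem A3_16_11_le_29_general {ι α : Type*} [Fintype ι] [Fintype α] [DecidableEq α] [Nonempty α]
    {d s k M : ℕ} (hι : Fintype.card ι = d + s + 1) (C : Finset (ι → α))
    (hC : ∀ u ∈ C, ∀ v ∈ C, u ≠ v → d ≤ hammingDist u v)
    (htight : s * (M * (M - 1)) + (d + s) * (Fintype.card α * (k * (k + 1))) ≤
      (d + s) * (2 * k * M))
    (hstep : s * M < (d + s) * k) (hdvd : ¬ s + 1 ∣ (d + s + 1) * (M - 1)) :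
    #C < Fintype.card α * M := by
  by_contra! hge
  obtain ⟨E, hEC, hcard⟩ := exists_subset_card_eq hge
  have hs : (E : Set (ι → α)).Pairwise fun u v ↦ agreement u v ≤ s + 1 := fun u hu v hv huv ↦ by
    have := hC u (hEC hu) v (hEC hv) huv
    have := agreement_add_hammingDist u v
    omega
  have card_fiber_le (i a) : #{v ∈ E | v i = a} ≤ M :=
    card_le_of_forall_apply_eq hι (hs.mono (coe_subset.2 (filter_subset _ _))) htight hstep
      fun v hv ↦ (mem_filter.1 hv).2
  have card_fiber (i a) := card_filter_eq_of_card_filter_le (card_fiber_le i) hcard a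
  have hM : 0 < M := Nat.pos_of_ne_zero fun h ↦ hdvd (by simp [h])
  obtain ⟨w, hw⟩ : E.Nonempty := card_pos.1 (hcard ▸ Nat.mul_pos Fintype.card_pos hM)
  have dvd_agreement := dvd_agreement_of_card_filter_eq hι hs htight card_fiber
  classical
  rw [← hι, ← sum_agreement_erase hw card_fiber] at hdvd
  exact hdvd (dvd_sum fun v hv ↦ dvd_agreement (mem_of_mem_erase hv) hw (ne_of_mem_erase hv))

/-- `A_3(16,11) ≤ 29`. -/
theorem A3_16_11_le_29 (C : Finset (Fin 16 → Fin 3))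
    (hC : ∀ u ∈ C, ∀ v ∈ C, u ≠ v → 11 ≤ hammingDist u v) :
    C.card ≤ 29 :=
  Nat.le_of_lt_succ <| A3_16_11_le_29_general (d := 11) (s := 4) (k := 3) (M := 10)
    (Fintype.card_fin 16) C hC (by decide) (by decide) (by decide)
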